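/- arXiv:2506.15077 — 2 statements merged into one kernel-verified Lean document; each statement's English description precedes it below -/
import Mathlib

section
/- Let T ⊂ ℝ² be a nondegenerate (positive-area) triangle with diameter h_T and area |T|, and let e be one of its edges, with length |e|. Then for every v ∈ C¹(T̄), ‖v‖_{L²(e)} ≤ (2|e|/|T|)^{1/2} ( ‖v‖_{L²(T)} + h_T ‖∇v‖_{L²(T)} ), where ‖v‖_{L²(e)} is taken with respect to one-dimensional arclength (Hausdorff) measure on e. -/
/-!
The divergence theorem for the field `v² (x - C)`, where `C` is the vertex opposite to the edge
`e = [A, B]`, gives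

  `(2 |T| / |e|) ∫_e v² = ∫_T (2 v² + 2 v ∇v · (x - C))`,

because `x - C` is tangent to the other two edges and its normal component on `e` is the height
`2 |T| / |e|`. Since `|x - C| ≤ h_T`, Young's inequality bounds the right-hand side by
`3 ‖v‖² + h_T² ‖∇v‖² ≤ 4 (‖v‖ + h_T ‖∇v‖)²`, which is the claim squared.

The identity (`setIntegral_fluxDiv`) is obtained without a general divergence theorem: in collapsed
coordinates `x = C + t ((1 - s) (A - C) + s (B - C))` on the unit square, with Jacobian `2 |T| t`
(`setIntegral_tri`), the integrand on the right becomes `2 |T|` times the `t`-derivative of `t² v²`,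
so that it suffices to integrate along each ray from `C` (`integral_ray`).
-/


open MeasureTheory Set Metric

noncomputable section

abbrev E2 : Type := EuclideanSpace ℝ (Fin 2)

/-- The (open) triangle with vertices A, B, C. -/
def Tri (A B C : E2) : Set E2 := interior (convexHull ℝ {A, B, C})

/-- L² norm of `v` over a set `D` (w.r.t. Lebesgue measure). -/
def L2T (v : E2 → ℝ) (D : Set E2) : ℝ :=
  Real.sqrt (∫ z in D, (v z) ^ 2)

/-- L² norm of the gradient of `v` over a set `D`. -/
def gradL2 (v : E2 → ℝ) (D : Set E2) : ℝ :=
  Real.sqrt (∫ z in D, ‖fderiv ℝ v z‖ ^ 2)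

/-- L² norm of `v` over the edge (segment) from A to B, with respect to
one-dimensional Hausdorff (arclength) measure. -/
def L2edge (v : E2 → ℝ) (A B : E2) : ℝ :=
  Real.sqrt (∫ z in segment ℝ A B, (v z) ^ 2 ∂(Measure.hausdorffMeasure 1))

/-- The collapsed coordinates on the triangle with apex `C`: `s` is the position on the edge
`[A, B]` and `t` the position on the ray from `C` (`t = 0`) to that edge (`t = 1`). -/
def collapse (A B C : E2) (s t : ℝ) : E2 := C + (t * (1 - s)) • (A - C) + (t * s) • (B - C)

/-- The determinant of the edge vectors `A - C`, `B - C`, that is, twice the signed area. -/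
def areaDet (A B C : E2) : ℝ :=
  (A 0 - C 0) * (B 1 - C 1) - (A 1 - C 1) * (B 0 - C 0)

theorem exists_basis {A B C : E2} (hABC : AffineIndependent ℝ ![A, B, C]) :
    ∃ b : AffineBasis (Fin 3) ℝ E2, b 0 = A ∧ b 1 = B ∧ b 2 = C := by
  have h : affineSpan ℝ (range ![A, B, C]) = ⊤ := by
    rw [hABC.affineSpan_eq_top_iff_card_eq_finrank_add_one]
    simp
  exact ⟨⟨_, hABC, h⟩, rfl, rfl, rfl⟩

theorem coord_collapse {A B C : E2} (b : AffineBasis (Fin 3) ℝ E2) (h0 : b 0 = A) (h1 : b 1 = B)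
    (h2 : b 2 = C) (s t : ℝ) (i : Fin 3) :
    b.coord i (collapse A B C s t) =
      (![t * (1 - s), t * s, 1 - t] : Fin 3 → ℝ) i := by
  have e : collapse A B C s t = ((t * (1 - s)) • (A -ᵥ C) + (t * s) • (B -ᵥ C)) +ᵥ C := by
    simp [collapse]; abel
  rw [e, AffineMap.map_vadd, map_add, map_smul, map_smul, AffineMap.linearMap_vsub,
    AffineMap.linearMap_vsub, ← h0, ← h1, ← h2]
  fin_cases i <;> simp
  ring

theorem range_basis {A B C : E2} (b : AffineBasis (Fin 3) ℝ E2) (h0 : b 0 = A) (h1 : b 1 = B)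
    (h2 : b 2 = C) : range b = {A, B, C} := by
  ext x
  simp only [mem_range, Fin.exists_fin_succ, mem_insert_iff, mem_singleton_iff]
  simp [← h0, ← h1, ← h2, eq_comm]

/-- Collapsed coordinates map the open unit square onto the open triangle, which in barycentric
coordinates is the set where all three coordinates are positive. -/
theorem mem_tri_iff {A B C : E2} (hABC : AffineIndependent ℝ ![A, B, C]) (x : E2) :
    x ∈ Tri A B C ↔ ∃ s ∈ Ioo (0 : ℝ) 1, ∃ t ∈ Ioo (0 : ℝ) 1, collapse A B C s t = x := by
  obtain ⟨b, h0, h1, h2⟩ := exists_basis hABC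
  rw [Tri, ← range_basis b h0 h1 h2, b.interior_convexHull]
  constructor
  · intro hx
    have hs : b.coord 0 x + b.coord 1 x + b.coord 2 x = 1 := by
      rw [← b.sum_coord_apply_eq_one x, Fin.sum_univ_three]
    have hl : b.coord 0 x • A + b.coord 1 x • B + b.coord 2 x • C = x := by
      rw [← h0, ← h1, ← h2]
      exact (Fin.sum_univ_three _).symm.trans (b.linear_combination_coord_eq_self x)
    have p0 := hx 0
    have p1 := hx 1
    have p2 := hx 2
    set α := b.coord 0 x
    set β := b.coord 1 x
    set γ := b.coord 2 x
    have hαβ : 0 < α + β := by positivity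
    refine ⟨β / (α + β), ⟨by positivity, by rw [div_lt_one hαβ]; linarith⟩, α + β,
      ⟨hαβ, by linarith⟩, ?_⟩
    have e1 : (α + β) * (1 - β / (α + β)) = α := by field_simp; ring
    have e2 : (α + β) * (β / (α + β)) = β := by field_simp
    have e3 : γ = 1 - α - β := by linarith
    rw [collapse, e1, e2, ← hl, e3]
    module
  · rintro ⟨s, hs, t, ht, rfl⟩ i
    rw [coord_collapse b h0 h1 h2]
    have a1 := sub_pos.2 hs.2
    have a2 := sub_pos.2 ht.2
    have a3 := hs.1
    have a4 := ht.1
    fin_cases i <;> simp <;> nlinarith [mul_pos a4 a1, mul_pos a4 a3]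

theorem collapse_inj {A B C : E2} (hABC : AffineIndependent ℝ ![A, B, C]) {s t s' t' : ℝ}
    (ht : 0 < t) (h : collapse A B C s t = collapse A B C s' t') : s = s' ∧ t = t' := by
  obtain ⟨b, h0, h1, h2⟩ := exists_basis hABC
  have k (i : Fin 3) := congrArg (b.coord i) h
  simp only [coord_collapse b h0 h1 h2] at k
  have k1 : t * s = t' * s' := k 1
  have k2 : 1 - t = 1 - t' := k 2
  obtain rfl : t = t' := by linarith
  exact ⟨mul_left_cancel₀ ht.ne' k1, rfl⟩

theorem collapse_mem_convexHull (A B C : E2) {s t : ℝ} (hs : s ∈ Icc (0 : ℝ) 1)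
    (ht : t ∈ Icc (0 : ℝ) 1) : collapse A B C s t ∈ convexHull ℝ ({A, B, C} : Set E2) := by
  have hK := convex_convexHull ℝ ({A, B, C} : Set E2)
  have hA : A ∈ convexHull ℝ ({A, B, C} : Set E2) := subset_convexHull _ _ (by simp)
  have hB : B ∈ convexHull ℝ ({A, B, C} : Set E2) := subset_convexHull _ _ (by simp)
  have hC : C ∈ convexHull ℝ ({A, B, C} : Set E2) := subset_convexHull _ _ (by simp)
  have h := hK hC (hK hA hB (sub_nonneg.2 hs.2) hs.1 (by ring)) (sub_nonneg.2 ht.2) ht.1 (by ring)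
  convert h using 1
  rw [collapse]
  module

/-- Integration over the triangle in collapsed coordinates, whose Jacobian is `t |areaDet|`. -/
theorem setIntegral_tri {A B C : E2} (hABC : AffineIndependent ℝ ![A, B, C]) (F : E2 → ℝ) :
    ∫ x in Tri A B C, F x = |areaDet A B C| *
      ∫ p in Ioo (0 : ℝ) 1 ×ˢ Ioo (0 : ℝ) 1, p.2 * F (collapse A B C p.1 p.2) := by
  let e : E2 → ℝ × ℝ := fun p => (p 0, p 1)
  have he : MeasurePreserving e :=
    (volume_preserving_finTwoArrow ℝ).comp
      (EuclideanSpace.volume_preserving_symm_measurableEquiv_toLp (Fin 2))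
  have he' : MeasurableEmbedding e :=
    ((MeasurableEquiv.toLp 2 (Fin 2 → ℝ)).symm.trans
      MeasurableEquiv.finTwoArrow).measurableEmbedding
  let S : Set E2 := e ⁻¹' (Ioo (0 : ℝ) 1 ×ˢ Ioo (0 : ℝ) 1)
  have hS : MeasurableSet S := he.measurable (measurableSet_Ioo.prod measurableSet_Ioo)
  let φ : E2 → E2 := fun p => collapse A B C (p 0) (p 1)
  have himg : φ '' S = Tri A B C := by
    ext x
    rw [mem_tri_iff hABC]
    constructor
    · rintro ⟨p, hp, rfl⟩
      exact ⟨p 0, hp.1, p 1, hp.2, rfl⟩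
    · rintro ⟨s, hs, t, ht, rfl⟩
      exact ⟨!₂[s, t], ⟨by simpa [e] using hs, by simpa [e] using ht⟩, by simp [φ]⟩
  have hinj : InjOn φ S := by
    intro p hp q hq h
    obtain ⟨h1, h2⟩ := collapse_inj hABC hp.2.1 h
    ext i
    fin_cases i
    · exact h1
    · exact h2
  let φ' : E2 → (E2 →L[ℝ] E2) := fun p =>
    (p 1 • (-(EuclideanSpace.proj (0 : Fin 2) : E2 →L[ℝ] ℝ)) +
      (1 - p 0) • (EuclideanSpace.proj (1 : Fin 2) : E2 →L[ℝ] ℝ)).smulRight (A - C) +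
    (p 1 • ((EuclideanSpace.proj (0 : Fin 2) : E2 →L[ℝ] ℝ)) +
      p 0 • (EuclideanSpace.proj (1 : Fin 2) : E2 →L[ℝ] ℝ)).smulRight (B - C)
  have hφ' (p : E2) : HasFDerivAt φ (φ' p) p := by
    have d0 : HasFDerivAt (fun p : E2 => p 0) (EuclideanSpace.proj (0 : Fin 2) : E2 →L[ℝ] ℝ) p :=
      (EuclideanSpace.proj (0 : Fin 2) : E2 →L[ℝ] ℝ).hasFDerivAt
    have d1 : HasFDerivAt (fun p : E2 => p 1) (EuclideanSpace.proj (1 : Fin 2) : E2 →L[ℝ] ℝ) p :=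
      (EuclideanSpace.proj (1 : Fin 2) : E2 →L[ℝ] ℝ).hasFDerivAt
    exact (((d1.mul (d0.const_sub 1)).smul_const (A - C)).const_add C).add
      ((d1.mul d0).smul_const (B - C))
  have hdet (p : E2) : (φ' p).det = -(p 1 * areaDet A B C) := by
    rw [ContinuousLinearMap.det, ← LinearMap.det_toMatrix (EuclideanSpace.basisFun (Fin 2) ℝ).toBasis,
      Matrix.det_fin_two]
    simp [LinearMap.toMatrix_apply, φ', areaDet]
    ring
  rw [← himg, integral_image_eq_integral_abs_det_fderiv_smul volume hS
    (fun x _ => (hφ' x).hasFDerivWithinAt) hinj, ← integral_const_mul,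
    ← he.setIntegral_preimage_emb he']
  refine setIntegral_congr_fun hS fun p hp => ?_
  have : 0 < p 1 := hp.2.1
  simp only [hdet, abs_neg, abs_mul, abs_of_pos this, smul_eq_mul, φ, e]
  ring

/-- The case `F = 1` of `setIntegral_tri`. -/
theorem volume_tri {A B C : E2} (hABC : AffineIndependent ℝ ![A, B, C]) :
    |areaDet A B C| = 2 * (volume (Tri A B C)).toReal := by
  have h := setIntegral_tri hABC (fun _ => 1)
  have : ∫ p in Ioo (0 : ℝ) 1 ×ˢ Ioo (0 : ℝ) 1, p.2 * (1 : ℝ) = 1 / 2 := by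
    have := setIntegral_prod_mul (μ := volume) (ν := volume) (fun _ : ℝ => (1 : ℝ))
      (fun t : ℝ => t) (Ioo 0 1) (Ioo 0 1)
    rw [← integral_Ioc_eq_integral_Ioo (f := fun t : ℝ => t),
      ← intervalIntegral.integral_of_le zero_le_one, integral_id] at this
    simpa [Measure.volume_eq_prod] using this
  rw [this] at h
  simp [Measure.real] at h
  linarith

theorem tri_nonempty {A B C : E2} (hABC : AffineIndependent ℝ ![A, B, C]) :
    (Tri A B C).Nonempty :=
  ⟨_, (mem_tri_iff hABC _).2
    ⟨1 / 2, ⟨by norm_num, by norm_num⟩, 1 / 2, ⟨by norm_num, by norm_num⟩, rfl⟩⟩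

theorem isCompact_hull (A B C : E2) : IsCompact (convexHull ℝ ({A, B, C} : Set E2)) :=
  Set.Finite.isCompact_convexHull ℝ (Set.toFinite _)

theorem volume_tri_pos {A B C : E2} (hABC : AffineIndependent ℝ ![A, B, C]) :
    0 < (volume (Tri A B C)).toReal :=
  ENNReal.toReal_pos (isOpen_interior.measure_pos volume (tri_nonempty hABC)).ne'
    ((measure_mono interior_subset).trans_lt (isCompact_hull A B C).measure_lt_top).ne

/-- One-dimensional Hausdorff measure on `[A, B]` is the pushforward of Lebesgue measure under the
arclength parametrization, which is an isometry of `ℝ`. -/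
theorem integral_edge {A B : E2} (hAB : A ≠ B) (F : E2 → ℝ) :
    ∫ z in segment ℝ A B, F z ∂(Measure.hausdorffMeasure 1) =
      dist A B * ∫ s in Ioo (0 : ℝ) 1, F (A + s • (B - A)) := by
  set L := dist A B with hL
  have hLpos : 0 < L := dist_pos.2 hAB
  have hn : ‖B - A‖ = L := by rw [hL, dist_comm, dist_eq_norm]
  let γ : ℝ → E2 := fun r => A + (r / L) • (B - A)
  have hγ : Isometry γ := by
    refine Isometry.of_dist_eq fun x y => ?_
    simp only [γ, dist_add_left]
    rw [dist_eq_norm, ← sub_smul, norm_smul, hn, ← sub_div, norm_div, Real.norm_of_nonneg hLpos.le,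
      div_mul_cancel₀ _ hLpos.ne', Real.dist_eq, Real.norm_eq_abs]
  have hseg : segment ℝ A B = γ '' Icc 0 L := by
    rw [segment_eq_image']
    ext x
    constructor
    · rintro ⟨s, hs, rfl⟩
      refine ⟨s * L, ⟨mul_nonneg hs.1 hLpos.le, by nlinarith [hs.2]⟩, ?_⟩
      simp only [γ, mul_div_cancel_right₀ _ hLpos.ne']
    · rintro ⟨r, hr, rfl⟩
      exact ⟨r / L, ⟨div_nonneg hr.1 hLpos.le, (div_le_one hLpos).2 hr.2⟩, rfl⟩
  have hemb : MeasurableEmbedding γ := hγ.isClosedEmbedding.measurableEmbedding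
  have h1 : ∫ z in segment ℝ A B, F z ∂(Measure.hausdorffMeasure 1) = ∫ r in Icc 0 L, F (γ r) := by
    have hm := hγ.map_hausdorffMeasure (d := 1) (Or.inl zero_le_one)
    have hsub : segment ℝ A B ⊆ range γ := hseg ▸ image_subset_range _ _
    rw [← Measure.restrict_restrict_of_subset hsub, ← hm, hemb.setIntegral_map, hseg,
      hγ.injective.preimage_image, hausdorffMeasure_real]
  rw [h1, integral_Icc_eq_integral_Ioc, ← intervalIntegral.integral_of_le hLpos.le,
    ← integral_Ioc_eq_integral_Ioo, ← intervalIntegral.integral_of_le zero_le_one]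
  have := intervalIntegral.integral_comp_div (a := 0) (b := L)
    (fun s : ℝ => F (A + s • (B - A))) hLpos.ne'
  simpa [hLpos.ne'] using this

/-- The divergence `2 v² + 2 v ∇v · (x - C)` of the field `v² (x - C)`. The derivative is taken
within `K`, so that it is continuous up to the boundary of a closed `K`; in the interior it is the
usual one. -/
def fluxDiv (v : E2 → ℝ) (K : Set E2) (C x : E2) : ℝ :=
  2 * v x ^ 2 + 2 * v x * fderivWithin ℝ v K x (x - C)

theorem continuousOn_fderivWithin_hull {A B C : E2} (hABC : AffineIndependent ℝ ![A, B, C])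
    {v : E2 → ℝ} (hv : ContDiffOn ℝ 1 v (convexHull ℝ {A, B, C})) :
    ContinuousOn (fderivWithin ℝ v (convexHull ℝ {A, B, C})) (convexHull ℝ {A, B, C}) :=
  hv.continuousOn_fderivWithin
    (uniqueDiffOn_convex (convex_convexHull ℝ _) (tri_nonempty hABC)) le_rfl

theorem continuousOn_fluxDiv {A B C : E2} (hABC : AffineIndependent ℝ ![A, B, C])
    {v : E2 → ℝ} (hv : ContDiffOn ℝ 1 v (convexHull ℝ {A, B, C})) :
    ContinuousOn (fluxDiv v (convexHull ℝ {A, B, C}) C) (convexHull ℝ {A, B, C}) := by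
  have h1 := hv.continuousOn
  have h2 := continuousOn_fderivWithin_hull hABC hv
  unfold fluxDiv
  exact ((h1.pow 2).const_smul (2 : ℝ)).add ((h1.const_smul (2 : ℝ)).mul
    (h2.clm_apply (continuousOn_id.sub continuousOn_const)))

theorem continuous_collapse (A B C : E2) : Continuous fun p : ℝ × ℝ => collapse A B C p.1 p.2 := by
  unfold collapse
  fun_prop

/-- The fundamental theorem of calculus for `t ↦ t² v²` along the ray from `C` to the point
`A + s (B - A)` of the edge. The factor `t²` removes the contribution of the apex. -/
theorem integral_ray {A B C : E2} (hABC : AffineIndependent ℝ ![A, B, C])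
    {v : E2 → ℝ} (hv : ContDiffOn ℝ 1 v (convexHull ℝ {A, B, C})) {s : ℝ}
    (hs : s ∈ Ioo (0 : ℝ) 1) :
    ∫ t in Ioo (0 : ℝ) 1, t * fluxDiv v (convexHull ℝ {A, B, C}) C (collapse A B C s t) =
      v (A + s • (B - A)) ^ 2 := by
  set K := convexHull ℝ ({A, B, C} : Set E2) with hK
  have hc : Continuous (collapse A B C s) :=
    (continuous_collapse A B C).comp (Continuous.prodMk_right s)
  have hmaps : MapsTo (collapse A B C s) (Icc 0 1) K := fun t ht =>
    collapse_mem_convexHull A B C (Ioo_subset_Icc_self hs) ht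
  rw [← integral_Ioc_eq_integral_Ioo, ← intervalIntegral.integral_of_le zero_le_one,
    intervalIntegral.integral_eq_sub_of_hasDerivAt_of_le (f := fun t => t ^ 2 * v (collapse A B C s t) ^ 2)
      zero_le_one]
  · have : collapse A B C s 1 = A + s • (B - A) := by rw [collapse]; module
    simp [this]
  · exact (continuousOn_id.pow 2).mul ((hv.continuousOn.comp hc.continuousOn hmaps).pow 2)
  · intro t ht
    have hmem : collapse A B C s t ∈ Tri A B C := (mem_tri_iff hABC _).2 ⟨s, hs, t, ht, rfl⟩
    have hnhds : K ∈ nhds (collapse A B C s t) := mem_interior_iff_mem_nhds.1 hmem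
    have hd : HasFDerivAt v (fderivWithin ℝ v K (collapse A B C s t)) (collapse A B C s t) :=
      ((hv.differentiableOn one_ne_zero _ (interior_subset hmem)).hasFDerivWithinAt).hasFDerivAt
        hnhds
    have hcol : HasDerivAt (collapse A B C s) ((1 * (1 - s)) • (A - C) + (1 * s) • (B - C)) t :=
      ((((hasDerivAt_id t).mul_const (1 - s)).smul_const (A - C)).const_add C).add
        (((hasDerivAt_id t).mul_const s).smul_const (B - C))
    have hv' := hd.comp_hasDerivAt t hcol
    have key : collapse A B C s t - C = t • ((1 * (1 - s)) • (A - C) + (1 * s) • (B - C)) := by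
      rw [collapse]; module
    refine ((hasDerivAt_pow 2 t).mul (hv'.pow 2)).congr_deriv ?_
    simp only [fluxDiv, key, map_smul, smul_eq_mul, Pi.pow_apply, Function.comp_apply]
    push_cast
    ring
  · refine ContinuousOn.intervalIntegrable ?_
    rw [uIcc_of_le zero_le_one]
    exact continuousOn_id.mul ((continuousOn_fluxDiv hABC hv).comp hc.continuousOn hmaps)

/-- The divergence theorem for `v² (x - C)`: its flux vanishes through the two edges meeting at `C`,
since `x - C` is tangent to them. -/
theorem setIntegral_fluxDiv {A B C : E2} (hABC : AffineIndependent ℝ ![A, B, C])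
    {v : E2 → ℝ} (hv : ContDiffOn ℝ 1 v (convexHull ℝ {A, B, C})) :
    ∫ x in Tri A B C, fluxDiv v (convexHull ℝ {A, B, C}) C x =
      |areaDet A B C| * ∫ s in Ioo (0 : ℝ) 1, v (A + s • (B - A)) ^ 2 := by
  rw [setIntegral_tri hABC, Measure.volume_eq_prod, setIntegral_prod]
  · congr 1
    exact setIntegral_congr_fun measurableSet_Ioo fun s hs => integral_ray hABC hv hs
  · rw [← Measure.volume_eq_prod]
    refine IntegrableOn.mono_set ?_ (prod_mono Ioo_subset_Icc_self Ioo_subset_Icc_self)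
    refine ContinuousOn.integrableOn_compact (isCompact_Icc.prod isCompact_Icc) ?_
    exact continuousOn_snd.mul ((continuousOn_fluxDiv hABC hv).comp
      (continuous_collapse A B C).continuousOn
      fun p hp => collapse_mem_convexHull A B C hp.1 hp.2)

/-- Young's inequality `2 v ∇v · (x - C) ≤ v² + |∇v · (x - C)|²`, integrated over the triangle. -/
theorem setIntegral_fluxDiv_le {A B C : E2} (hABC : AffineIndependent ℝ ![A, B, C])
    {v : E2 → ℝ} (hv : ContDiffOn ℝ 1 v (convexHull ℝ {A, B, C})) :
    ∫ x in Tri A B C, fluxDiv v (convexHull ℝ {A, B, C}) C x ≤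
      3 * L2T v (Tri A B C) ^ 2 +
        (Metric.diam (convexHull ℝ ({A, B, C} : Set E2)) * gradL2 v (Tri A B C)) ^ 2 := by
  set K := convexHull ℝ ({A, B, C} : Set E2) with hK
  set h := Metric.diam K
  have hcpt : IsCompact K := isCompact_hull A B C
  have hTK : Tri A B C ⊆ K := interior_subset
  have hTm : MeasurableSet (Tri A B C) := isOpen_interior.measurableSet
  have hfd : ∀ x ∈ Tri A B C, fderivWithin ℝ v K x = fderiv ℝ v x := fun x hx =>
    fderivWithin_of_mem_nhds (mem_interior_iff_mem_nhds.1 hx)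
  have i1 : IntegrableOn (fun x => v x ^ 2) (Tri A B C) :=
    ((hv.continuousOn.pow 2).integrableOn_compact hcpt).mono_set hTK
  have i2 : IntegrableOn (fun x => ‖fderivWithin ℝ v K x‖ ^ 2) (Tri A B C) :=
    (((continuousOn_fderivWithin_hull hABC hv).norm.pow 2).integrableOn_compact hcpt).mono_set hTK
  have i3 : IntegrableOn (fluxDiv v K C) (Tri A B C) :=
    ((continuousOn_fluxDiv hABC hv).integrableOn_compact hcpt).mono_set hTK
  have e1 : L2T v (Tri A B C) ^ 2 = ∫ x in Tri A B C, v x ^ 2 :=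
    Real.sq_sqrt (integral_nonneg fun x => sq_nonneg _)
  have e2 : gradL2 v (Tri A B C) ^ 2 = ∫ x in Tri A B C, ‖fderivWithin ℝ v K x‖ ^ 2 := by
    rw [gradL2, Real.sq_sqrt (integral_nonneg fun x => sq_nonneg _)]
    exact setIntegral_congr_fun hTm fun x hx => by simp only [hfd x hx]
  rw [mul_pow, e1, e2, ← integral_const_mul, ← integral_const_mul,
    ← integral_add (i1.const_mul 3) (i2.const_mul (h ^ 2))]
  refine setIntegral_mono_on i3 ((i1.const_mul 3).add (i2.const_mul (h ^ 2))) hTm fun x hx => ?_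
  have hCK : C ∈ K := subset_convexHull _ _ (by simp)
  have hb : ‖fderivWithin ℝ v K x (x - C)‖ ≤ ‖fderivWithin ℝ v K x‖ * h := by
    refine (ContinuousLinearMap.le_opNorm _ _).trans ?_
    gcongr
    rw [← dist_eq_norm]
    exact Metric.dist_le_diam_of_mem hcpt.isBounded (hTK hx) hCK
  have hsq : fderivWithin ℝ v K x (x - C) ^ 2 ≤ (‖fderivWithin ℝ v K x‖ * h) ^ 2 := 
    sq_le_sq' (abs_le.1 hb).1 (abs_le.1 hb).2
  simp only [fluxDiv]
  nlinarith [sq_nonneg (v x - fderivWithin ℝ v K x (x - C))]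

/-- Trace theorem (Lemma 3.4): for a nondegenerate triangle T with edge e = [A,B],
‖v‖_{L²(e)} ≤ (2|e|/|T|)^{1/2} (‖v‖_{L²(T)} + h_T ‖∇v‖_{L²(T)}) for all v ∈ C¹(T̄). -/
theorem stmt2 (A B C : E2) (hABC : AffineIndependent ℝ ![A, B, C])
    (v : E2 → ℝ) (hv : ContDiffOn ℝ 1 v (convexHull ℝ {A, B, C})) :
    L2edge v A B ≤
      Real.sqrt (2 * dist A B / (volume (Tri A B C)).toReal) *
        (L2T v (Tri A B C) +
          Metric.diam (convexHull ℝ ({A, B, C} : Set E2)) * gradL2 v (Tri A B C)) := by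
  have hAB : A ≠ B := fun h => by
    have := hABC.injective (a₁ := 0) (a₂ := 1) (by simpa using h)
    simp at this
  have hT := volume_tri_pos hABC
  have hG := setIntegral_fluxDiv hABC hv
  have hle := setIntegral_fluxDiv_le hABC hv
  rw [hG, volume_tri hABC] at hle
  set α := L2T v (Tri A B C) with hα
  set β := Metric.diam (convexHull ℝ ({A, B, C} : Set E2)) * gradL2 v (Tri A B C) with hβ
  have hα0 : 0 ≤ α := Real.sqrt_nonneg _
  have hβ0 : 0 ≤ β := mul_nonneg Metric.diam_nonneg (Real.sqrt_nonneg _)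
  rw [L2edge, integral_edge hAB (fun z => v z ^ 2)]
  set I := ∫ s in Ioo (0 : ℝ) 1, v (A + s • (B - A)) ^ 2
  set τ := (volume (Tri A B C)).toReal
  refine Real.sqrt_le_iff.2 ⟨by positivity, ?_⟩
  rw [mul_pow, Real.sq_sqrt (by positivity)]
  -- `2 τ I ≤ 3 α² + β² ≤ 4 (α + β)²`
  have hI : τ * I ≤ 2 * (α + β) ^ 2 := by nlinarith [mul_nonneg hα0 hβ0]
  calc dist A B * I = dist A B / τ * (τ * I) := by field_simp
    _ ≤ dist A B / τ * (2 * (α + β) ^ 2) := by gcongr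
    _ = 2 * dist A B / τ * (α + β) ^ 2 := by ring
end
end

section
/- Let T ⊂ ℝ² be a nondegenerate (positive-area) triangle with diameter h_T and area |T|, and let e be one of its edges, with length |e|. Then for every v ∈ C¹(T̄), ‖v‖_{L²(e)} ≤ (|e|/|T|)^{1/2} ( ‖v‖_{L²(T)} + h_T ‖∇v‖_{L²(T)} ), where ‖v‖_{L²(e)} is taken with respect to one-dimensional arclength (Hausdorff) measure on e. -/
/-!
The divergence of `v² (z - C)` is `2 v² + 2 v ∇v · (z - C)`, and the normal component of this field
vanishes on the two sides through `C` and equals `(2|T|/|e|) v²` on `e = [A, B]`. Hence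
`|T|/|e| ∫_e v² = ∫_T (v² + v ∇v · (z - C))`, and since `|z - C| ≤ h_T`, Cauchy–Schwarz bounds the
right-hand side by `‖v‖² + h_T ‖v‖ ‖∇v‖ ≤ (‖v‖ + h_T ‖∇v‖)²`.

This instance of the divergence theorem is proved by hand in the cone coordinates
`z = C + s (A + t (B - A) - C)`, `(t, s) ∈ [0, 1]²`, whose Jacobian is `2|T| s`
(`exists_integral_eq`): along each ray from `C`, `v²` at the endpoint is the integral of
`d/ds (s² v²)` (`ray_identity`), and integrating over `t` yields `edge_eq_triangle`.

Up to the boundary, the gradient is `fderivWithin` on the closed triangle, which is continuous there;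
it agrees with `fderiv` in the interior, and the boundary is a null set.
-/

open MeasureTheory Set Metric

noncomputable section

/-- The edge is the image of `[0, |e|]` under the arclength parametrization, which is an isometry, so
`μH[1]` restricted to it is transported Lebesgue measure; rescaling gives the parameter `t ∈ [0, 1]`. -/
theorem edge_integral (A B : E2) (h : A ≠ B) (g : E2 → ℝ) :
    ∫ z in segment ℝ A B, g z ∂(Measure.hausdorffMeasure 1) =
      dist A B * ∫ t in (0:ℝ)..1, g (A + t • (B - A)) := by
  have hd : 0 < dist A B := dist_pos.2 h
  set d := dist A B with hdd
  have hn : ‖B - A‖ = d := by rw [hdd, dist_comm, dist_eq_norm]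
  set u : E2 := d⁻¹ • (B - A) with hu
  have hun : ‖u‖ = 1 := by
    rw [hu, norm_smul, hn, norm_inv, Real.norm_of_nonneg hd.le, inv_mul_cancel₀ hd.ne']
  let ι : ℝ → E2 := fun r => A + r • u
  have hι : Isometry ι := by
    refine Isometry.of_dist_eq fun x y => ?_
    simp only [ι, dist_add_left]
    rw [dist_eq_norm, ← sub_smul, norm_smul, hun, mul_one, Real.dist_eq, Real.norm_eq_abs]
  have hseg : segment ℝ A B = ι '' Icc 0 d := by
    rw [segment_eq_image']
    ext z
    constructor
    · rintro ⟨t, ht, rfl⟩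
      refine ⟨t * d, ⟨mul_nonneg ht.1 hd.le, mul_le_of_le_one_left hd.le ht.2⟩, ?_⟩
      simp only [ι, hu, smul_smul]
      rw [mul_assoc, mul_inv_cancel₀ hd.ne', mul_one]
    · rintro ⟨r, hr, rfl⟩
      refine ⟨r / d, ⟨div_nonneg hr.1 hd.le, (div_le_one hd).2 hr.2⟩, ?_⟩
      simp only [ι, hu, smul_smul]
      rfl
  have hemb : MeasurableEmbedding ι := hι.isClosedEmbedding.measurableEmbedding
  have hsub : segment ℝ A B ⊆ range ι := hseg ▸ image_subset_range _ _
  have hmap := hι.map_hausdorffMeasure (d := 1) (Or.inl zero_le_one)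
  have h1 : ∫ z in segment ℝ A B, g z ∂(Measure.hausdorffMeasure 1) =
      ∫ r in Icc 0 d, g (ι r) := by
    have := hemb.setIntegral_map (μ := Measure.hausdorffMeasure 1) g (segment ℝ A B)
    rw [hmap, Measure.restrict_restrict_of_subset hsub, hseg,
      preimage_image_eq _ hι.injective, hausdorffMeasure_real] at this
    rw [hseg, this]
  rw [h1, integral_Icc_eq_integral_Ioc, ← intervalIntegral.integral_of_le hd.le]
  have h2 := intervalIntegral.mul_integral_comp_mul_left (a := 0) (b := 1)
    (f := fun r => g (ι r)) d
  rw [mul_zero, mul_one] at h2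
  rw [← h2]
  simp only [ι, hu, smul_smul]
  congr 2
  ext t
  rw [mul_comm d t, mul_assoc, mul_inv_cancel₀ hd.ne', mul_one]

/-- Change of variables `(t, s) ↦ (s, s t)` (Jacobian `s`) from the unit square onto the reference
triangle `0 ≤ y ≤ x ≤ 1`; it collapses the side `s = 0` to the vertex `0`. -/
theorem duffy (f : ℝ × ℝ → ℝ)
    (hf : IntegrableOn (fun p : ℝ × ℝ => p.2 * f (p.2, p.2 * p.1)) (Icc 0 1 ×ˢ Icc 0 1)) :
    ∫ q in (fun p : ℝ × ℝ => (p.2, p.2 * p.1)) '' (Icc 0 1 ×ˢ Icc 0 1), f q =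
      ∫ t in (0:ℝ)..1, ∫ s in (0:ℝ)..1, s * f (s, s * t) := by
  set ψ : ℝ × ℝ → ℝ × ℝ := fun p => (p.2, p.2 * p.1) with hψ
  -- Discarding `s = 0` makes the map injective and only removes one point from the image.
  set Q : Set (ℝ × ℝ) := Icc 0 1 ×ˢ Ioc 0 1 with hQ
  have himg : (ψ '' (Icc 0 1 ×ˢ Icc 0 1) : Set (ℝ × ℝ)) =ᵐ[volume] ψ '' Q := by
    have hins : ψ '' (Icc 0 1 ×ˢ Icc 0 1) = insert 0 (ψ '' Q) := by
      ext q
      constructor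
      · rintro ⟨⟨t, s⟩, ⟨ht, hs⟩, rfl⟩
        rcases hs.1.eq_or_lt with h0 | h0
        · left
          simp only at h0
          simp [hψ, ← h0]
        · exact Or.inr ⟨(t, s), ⟨ht, h0, hs.2⟩, rfl⟩
      · rintro (rfl | ⟨p, hp, rfl⟩)
        · exact ⟨(0, 0), by simp, by simp [hψ]⟩
        · exact ⟨p, ⟨hp.1, Ioc_subset_Icc_self hp.2⟩, rfl⟩
    rw [hins]
    exact insert_ae_eq_self _ _
  have hder : ∀ p : ℝ × ℝ, HasFDerivAt ψ ((Matrix.toLin (.finTwoProd ℝ) (.finTwoProd ℝ)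
      !![0, 1; p.2, p.1]).toContinuousLinearMap) p := by
    intro p
    rw [Matrix.toLin_finTwoProd_toContinuousLinearMap]
    convert! HasFDerivAt.prodMk (𝕜 := ℝ) (hasFDerivAt_snd (p := p))
      ((hasFDerivAt_snd (𝕜 := ℝ) (p := p)).mul (hasFDerivAt_fst (p := p))) using 2
    simp
  have hinj : InjOn ψ Q := by
    rintro ⟨t, s⟩ h ⟨t', s'⟩ h' heq
    simp only [hψ, Prod.mk.injEq] at heq
    obtain ⟨rfl, h2⟩ := heq
    have : t = t' := mul_left_cancel₀ (ne_of_gt h.2.1) h2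
    rw [this]
  rw [setIntegral_congr_set himg, integral_image_eq_integral_abs_det_fderiv_smul volume
    (measurableSet_Icc.prod measurableSet_Ioc) (fun p _ => (hder p).hasFDerivWithinAt) hinj]
  have h3 : ∫ p in Q, |((Matrix.toLin (.finTwoProd ℝ) (.finTwoProd ℝ)
      !![0, 1; p.2, p.1]).toContinuousLinearMap).det| • f (ψ p) =
      ∫ p in Q, p.2 * f (p.2, p.2 * p.1) := by
    refine setIntegral_congr_fun (measurableSet_Icc.prod measurableSet_Ioc) fun p hp => ?_
    simp [hψ, LinearMap.det_toContinuousLinearMap, Matrix.det_fin_two_of, abs_of_pos hp.2.1]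
  rw [h3, hQ, Measure.volume_eq_prod, setIntegral_prod _
    (hf.mono_set (prod_mono le_rfl Ioc_subset_Icc_self)), integral_Icc_eq_integral_Ioc,
    intervalIntegral.integral_of_le zero_le_one]
  simp only [intervalIntegral.integral_of_le (zero_le_one (α := ℝ))]


/-- The point of `conv {A, B, C}` at fraction `s` of the way from `C` to `A + t (B - A)`. -/
def conePt (A B C : E2) (t s : ℝ) : E2 := C + s • (A + t • (B - A) - C)

theorem convexHull_eq_conePt (A B C : E2) :
    convexHull ℝ {A, B, C} = (fun p : ℝ × ℝ => conePt A B C p.1 p.2) '' (Icc 0 1 ×ˢ Icc 0 1) := by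
  have h : ({A, B, C} : Set E2) = insert C {A, B} := by
    ext z; simp only [mem_insert_iff, mem_singleton_iff]; tauto
  rw [h, convexHull_insert (insert_nonempty _ _), convexHull_pair]
  ext z
  simp only [mem_convexJoin, mem_singleton_iff, exists_eq_left, segment_eq_image', mem_image]
  constructor
  · rintro ⟨_, ⟨t, ht, rfl⟩, s, hs, rfl⟩
    exact ⟨(t, s), ⟨ht, hs⟩, rfl⟩
  · rintro ⟨⟨t, s⟩, ⟨ht, hs⟩, rfl⟩
    exact ⟨_, ⟨t, ht, rfl⟩, s, hs, rfl⟩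

/-- The affine chart `(x, y) ↦ C + x (A - C) + y (B - A)`, in which the cone parametrization becomes
`(t, s) ↦ (s, s t)`. -/
theorem exists_coords {A B C : E2} (hABC : AffineIndependent ℝ ![A, B, C]) :
    ∃ M : (ℝ × ℝ) ≃L[ℝ] E2, ∀ t s : ℝ, conePt A B C t s = C + M (s, s * t) := by
  let f : ℝ × ℝ →ₗ[ℝ] E2 :=
    (LinearMap.fst ℝ ℝ ℝ).smulRight (A - C) + (LinearMap.snd ℝ ℝ ℝ).smulRight (B - A)
  have hfa : ∀ p : ℝ × ℝ, f p = p.1 • (A - C) + p.2 • (B - A) := fun p => rfl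
  have hinj : Function.Injective f := by
    rw [injective_iff_map_eq_zero]
    rintro ⟨x, y⟩ h
    have := (affineIndependent_iff.1 hABC) Finset.univ ![x - y, y, -x]
      (by simp [Fin.sum_univ_three])
      (by
        rw [hfa] at h
        simp only [Fin.sum_univ_three, Matrix.cons_val]
        rw [← h]
        module)
    have h1 := this 1 (Finset.mem_univ _)
    have h2 := this 2 (Finset.mem_univ _)
    simp at h1 h2
    simp [h1, h2]
  let M := (f.linearEquivOfInjective hinj (by simp)).toContinuousLinearEquiv
  refine ⟨M, fun t s => ?_⟩
  have : M (s, s * t) = f (s, s * t) := rfl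
  rw [this, hfa, conePt]
  module

theorem conePt_mem_interior {A B C : E2} (hABC : AffineIndependent ℝ ![A, B, C]) {t s : ℝ}
    (ht : t ∈ Ioo (0:ℝ) 1) (hs : s ∈ Ioo (0:ℝ) 1) :
    conePt A B C t s ∈ interior (convexHull ℝ {A, B, C}) := by
  obtain ⟨M, hM⟩ := exists_coords hABC
  let e : ℝ × ℝ ≃ₜ E2 := M.toHomeomorph.trans (Homeomorph.addLeft C)
  have he : ∀ p, e p = C + M p := fun p => rfl
  have hopen : IsOpen {p : ℝ × ℝ | 0 < p.2 ∧ p.2 < p.1 ∧ p.1 < 1} :=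
    (isOpen_lt continuous_const continuous_snd).inter
      ((isOpen_lt continuous_snd continuous_fst).inter
        (isOpen_lt continuous_fst continuous_const))
  refine interior_maximal ?_ (e.isOpenMap _ hopen)
    ⟨(s, s * t), ⟨mul_pos hs.1 ht.1, mul_lt_of_lt_one_right hs.1 ht.2, hs.2⟩, ?_⟩
  · rintro _ ⟨⟨x, y⟩, ⟨h1, h2, h3⟩, rfl⟩
    simp only at h1 h2 h3
    have hx : 0 < x := h1.trans h2
    rw [convexHull_eq_conePt]
    refine ⟨(y / x, x), ⟨⟨by positivity, (div_le_one hx).2 h2.le⟩, hx.le, h3.le⟩, ?_⟩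
    simp only [hM, he]
    rw [mul_div_cancel₀ _ hx.ne']
  · rw [he, hM]

theorem continuous_conePt (A B C : E2) :
    Continuous fun p : ℝ × ℝ => conePt A B C p.1 p.2 := by
  unfold conePt; fun_prop

/-- Integration over the triangle in the cone coordinates `(t, s)`. The constant `k` (twice the area)
is given by uniqueness of Haar measure, and is identified later by taking `f = 1`. -/
theorem exists_integral_eq {A B C : E2} (hABC : AffineIndependent ℝ ![A, B, C]) :
    ∃ k : ℝ, ∀ f : E2 → ℝ, ContinuousOn f (convexHull ℝ {A, B, C}) →
      ∫ z in Tri A B C, f z =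
        k * ∫ t in (0:ℝ)..1, ∫ s in (0:ℝ)..1, s * f (conePt A B C t s) := by
  obtain ⟨M, hM⟩ := exists_coords hABC
  have := M.isAddHaarMeasure_map volume
  obtain ⟨c, hc⟩ : ∃ c : NNReal, (volume : Measure E2) = c • Measure.map M volume :=
    ⟨_, Measure.isAddLeftInvariant_eq_smul volume (Measure.map M volume)⟩
  refine ⟨c, fun f hf => ?_⟩
  let e : ℝ × ℝ ≃ₜ E2 := M.toHomeomorph.trans (Homeomorph.addLeft C)
  have he : ∀ p, e p = C + M p := fun p => rfl
  have hmap : (volume : Measure E2) = c • Measure.map e volume := by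
    have h1 : Measure.map (fun x => C + x) (volume : Measure E2) = volume :=
      map_add_left_eq_self _ C
    rw [← h1, hc, Measure.map_smul, Measure.map_map (by fun_prop) (by fun_prop)]
    rfl
  have hint : ∫ z in Tri A B C, f z = ∫ z in convexHull ℝ {A, B, C}, f z :=
    setIntegral_congr_set (interior_ae_eq_of_null_frontier
      ((convex_convexHull ℝ _).addHaar_frontier volume))
  have hpre : e ⁻¹' (convexHull ℝ {A, B, C}) =
      (fun p : ℝ × ℝ => (p.2, p.2 * p.1)) '' (Icc 0 1 ×ˢ Icc 0 1) := by
    rw [convexHull_eq_conePt]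
    have : (fun p : ℝ × ℝ => conePt A B C p.1 p.2) = e ∘ (fun p : ℝ × ℝ => (p.2, p.2 * p.1)) := by
      funext p
      simp [hM, he]
    rw [this, image_comp, preimage_image_eq _ e.injective]
  rw [hint]
  conv_lhs => rw [hmap]
  rw [Measure.restrict_smul, integral_smul_nnreal_measure, e.measurableEmbedding.setIntegral_map,
    hpre, duffy]
  · simp only [he, ← hM]
    rfl
  · simp only [he, ← hM]
    refine ContinuousOn.integrableOn_compact (isCompact_Icc.prod isCompact_Icc) ?_
    refine continuousOn_snd.mul (hf.comp (continuous_conePt A B C).continuousOn fun p hp => ?_)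
    rw [convexHull_eq_conePt]
    exact ⟨p, hp, rfl⟩

/-- Fundamental theorem of calculus for `s ↦ s² v(conePt t s)²` on `[0, 1]`. The endpoints `t = 0, 1`
are excluded so that the ray runs through the interior of the triangle, where `v` is
differentiable. -/
theorem ray_identity {A B C : E2} (hABC : AffineIndependent ℝ ![A, B, C])
    {v : E2 → ℝ} (hv : ContDiffOn ℝ 1 v (convexHull ℝ {A, B, C}))
    (hG : ContinuousOn (fderivWithin ℝ v (convexHull ℝ {A, B, C})) (convexHull ℝ {A, B, C}))
    {t : ℝ} (ht : t ∈ Ioo (0:ℝ) 1) :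
    v (A + t • (B - A)) ^ 2 = 2 * ∫ s in (0:ℝ)..1, s * (v (conePt A B C t s) ^ 2 +
      v (conePt A B C t s) * fderivWithin ℝ v (convexHull ℝ {A, B, C}) (conePt A B C t s)
        (conePt A B C t s - C)) := by
  set K := convexHull ℝ {A, B, C} with hK
  have hmaps : MapsTo (conePt A B C t) (Icc 0 1) K := fun s hs => by
    rw [hK, convexHull_eq_conePt]
    exact ⟨(t, s), ⟨Ioo_subset_Icc_self ht, hs⟩, rfl⟩
  have hcont : Continuous (conePt A B C t) := by
    unfold conePt; fun_prop
  have hvc : ContinuousOn (fun s => v (conePt A B C t s)) (Icc 0 1) :=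
    hv.continuousOn.comp hcont.continuousOn hmaps
  have hGc : ContinuousOn (fun s => fderivWithin ℝ v K (conePt A B C t s)) (Icc 0 1) :=
    hG.comp hcont.continuousOn hmaps
  have hcd : ∀ s, HasDerivAt (conePt A B C t) (A + t • (B - A) - C) s := fun s => by
    have h := ((hasDerivAt_id s).smul_const (A + t • (B - A) - C)).const_add C
    rw [one_smul] at h
    exact h
  rw [← intervalIntegral.integral_const_mul]
  have key := intervalIntegral.integral_eq_sub_of_hasDerivAt_of_le (a := (0:ℝ)) (b := 1)
    (f := fun s => s ^ 2 * v (conePt A B C t s) ^ 2)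
    (f' := fun s => 2 * (s * (v (conePt A B C t s) ^ 2 +
      v (conePt A B C t s) * fderivWithin ℝ v K (conePt A B C t s)
        (conePt A B C t s - C)))) zero_le_one
    ((continuousOn_id.pow 2).mul (hvc.pow 2)) ?_ ?_
  · rw [key]
    simp [conePt]
  · intro s hs
    have hnhds : K ∈ nhds (conePt A B C t s) :=
      mem_interior_iff_mem_nhds.1 (conePt_mem_interior hABC ht hs)
    have hdv : HasFDerivAt v (fderivWithin ℝ v K (conePt A B C t s)) (conePt A B C t s) :=
      ((hv.differentiableOn one_ne_zero _ (mem_of_mem_nhds hnhds)).hasFDerivWithinAt).hasFDerivAt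
        hnhds
    have h1 := ((hasDerivAt_id s).pow 2).mul ((hdv.comp_hasDerivAt s (hcd s)).pow 2)
    refine h1.congr_deriv ?_
    have : conePt A B C t s - C = s • (A + t • (B - A) - C) := by simp [conePt]
    rw [this, map_smul]
    simp
    ring
  · refine ContinuousOn.intervalIntegrable_of_Icc zero_le_one ?_
    exact continuousOn_const.mul (continuousOn_id.mul ((hvc.pow 2).add
      (hvc.mul (hGc.clm_apply (hcont.sub continuous_const).continuousOn))))

/-- The divergence theorem for the field `v² (z - C)`: its flux vanishes through the two sides at `C`. -/
theorem edge_eq_triangle {A B C : E2} (hABC : AffineIndependent ℝ ![A, B, C])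
    {v : E2 → ℝ} (hv : ContDiffOn ℝ 1 v (convexHull ℝ {A, B, C}))
    (hG : ContinuousOn (fderivWithin ℝ v (convexHull ℝ {A, B, C})) (convexHull ℝ {A, B, C})) :
    ∫ z in Tri A B C, (v z ^ 2 +
        v z * fderivWithin ℝ v (convexHull ℝ {A, B, C}) z (z - C)) =
      (volume (Tri A B C)).toReal * ∫ t in (0:ℝ)..1, v (A + t • (B - A)) ^ 2 := by
  obtain ⟨k, hk⟩ := exists_integral_eq hABC
  have hvol : (volume (Tri A B C)).toReal = k / 2 := by
    have h1 := hk (fun _ => 1) continuousOn_const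
    simp [integral_id, Measure.real] at h1
    rw [h1]
    ring
  have h1 := hk (fun z => v z ^ 2 + v z * fderivWithin ℝ v (convexHull ℝ {A, B, C}) z (z - C))
    ((hv.continuousOn.pow 2).add (hv.continuousOn.mul
      (hG.clm_apply (continuous_id.sub continuous_const).continuousOn)))
  rw [hvol, h1]
  have h2 : ∫ t in (0:ℝ)..1, v (A + t • (B - A)) ^ 2 =
      ∫ t in (0:ℝ)..1, 2 * ∫ s in (0:ℝ)..1, s * (v (conePt A B C t s) ^ 2 +
      v (conePt A B C t s) * fderivWithin ℝ v (convexHull ℝ {A, B, C}) (conePt A B C t s)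
        (conePt A B C t s - C)) := by
    rw [intervalIntegral.integral_of_le zero_le_one, intervalIntegral.integral_of_le zero_le_one,
      integral_Ioc_eq_integral_Ioo, integral_Ioc_eq_integral_Ioo]
    exact setIntegral_congr_fun measurableSet_Ioo fun t ht => ray_identity hABC hv hG ht
  rw [h2, intervalIntegral.integral_const_mul]
  ring

/-- Cauchy–Schwarz on a measurable subset of a compact set. -/
theorem integral_mul_le_sqrt_mul_sqrt {K T : Set E2} (hK : IsCompact K) (hTK : T ⊆ K)
    {f g : E2 → ℝ} (hf : ContinuousOn f K) (hg : ContinuousOn g K)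
    (hT : MeasurableSet T) (hf0 : ∀ z, 0 ≤ f z) (hg0 : ∀ z, 0 ≤ g z) :
    ∫ z in T, f z * g z ≤ √(∫ z in T, f z ^ 2) * √(∫ z in T, g z ^ 2) := by
  have hL : ∀ u : E2 → ℝ, ContinuousOn u K → MemLp u 2 (volume.restrict T) := fun u hu =>
    (memLp_two_iff_integrable_sq ((hu.mono hTK).aestronglyMeasurable hT)).2
      (((hu.pow 2).integrableOn_compact hK).mono_set hTK)
  have := integral_mul_le_Lp_mul_Lq_of_nonneg (μ := volume.restrict T)
    Real.HolderConjugate.two_two (f := f) (g := g)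
    (Filter.Eventually.of_forall hf0) (Filter.Eventually.of_forall hg0)
    (by simpa using hL f hf) (by simpa using hL g hg)
  simpa [Real.sqrt_eq_rpow] using this

/-- Refined trace theorem on anisotropic triangles: for a nondegenerate triangle T with edge e = [A,B],
‖v‖_{L²(e)} ≤ (|e|/|T|)^{1/2} (‖v‖_{L²(T)} + h_T ‖∇v‖_{L²(T)}) for all v ∈ C¹(T̄). -/
theorem stmt3 (A B C : E2) (hABC : AffineIndependent ℝ ![A, B, C])
    (v : E2 → ℝ) (hv : ContDiffOn ℝ 1 v (convexHull ℝ {A, B, C})) :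
    L2edge v A B ≤
      Real.sqrt (dist A B / (volume (Tri A B C)).toReal) *
        (L2T v (Tri A B C) +
          Metric.diam (convexHull ℝ ({A, B, C} : Set E2)) * gradL2 v (Tri A B C)) := by
  have hAB : A ≠ B := fun h => by
    have := hABC.injective (a₁ := 0) (a₂ := 1) (by simpa using h)
    simp at this
  have hne : (Tri A B C).Nonempty := ⟨_, conePt_mem_interior hABC
    (t := 1 / 2) (s := 1 / 2) (by norm_num) (by norm_num)⟩
  have hKc : IsCompact (convexHull ℝ ({A, B, C} : Set E2)) :=
    (Set.toFinite {A, B, C}).isCompact_convexHull ℝ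
  have hG := hv.continuousOn_fderivWithin
    (uniqueDiffOn_convex (convex_convexHull ℝ _) hne) le_rfl
  have hTK : Tri A B C ⊆ convexHull ℝ {A, B, C} := interior_subset
  have hTm : MeasurableSet (Tri A B C) := isOpen_interior.measurableSet
  have hpos : 0 < (volume (Tri A B C)).toReal :=
    ENNReal.toReal_pos (isOpen_interior.measure_pos volume hne).ne'
      ((measure_mono hTK).trans_lt hKc.measure_lt_top).ne
  have heq := edge_eq_triangle hABC hv hG
  have hC : C ∈ convexHull ℝ ({A, B, C} : Set E2) := subset_convexHull ℝ _ (by simp)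
  have hgrad : gradL2 v (Tri A B C) =
      √(∫ z in Tri A B C, ‖fderivWithin ℝ v (convexHull ℝ {A, B, C}) z‖ ^ 2) := by
    unfold gradL2
    congr 1
    refine setIntegral_congr_fun hTm fun z hz => ?_
    rw [fderivWithin_of_mem_nhds (mem_interior_iff_mem_nhds.1 hz)]
  set K : Set E2 := convexHull ℝ ({A, B, C} : Set E2) with hK
  set T := Tri A B C with hT
  have hint : ∀ u : E2 → ℝ, ContinuousOn u K → IntegrableOn u T := fun u hu =>
    (hu.integrableOn_compact hKc).mono_set hTK
  have hvc := hv.continuousOn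
  have hbound : ∫ z in T, (v z ^ 2 + v z * fderivWithin ℝ v K z (z - C)) ≤
      (L2T v T + diam K * gradL2 v T) ^ 2 := by
    have h1 : ∫ z in T, (v z ^ 2 + v z * fderivWithin ℝ v K z (z - C)) ≤
        ∫ z in T, (v z ^ 2 + diam K * (|v z| * ‖fderivWithin ℝ v K z‖)) := by
      refine setIntegral_mono_on (hint _ ?_) (hint _ ?_) hTm fun z hz => ?_
      · exact (hvc.pow 2).add (hvc.mul
          (hG.clm_apply (continuous_id.sub continuous_const).continuousOn))
      · exact (hvc.pow 2).add (continuousOn_const.mul (hvc.abs.mul hG.norm))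
      · have hd : ‖z - C‖ ≤ diam K := by
          rw [← dist_eq_norm]
          exact dist_le_diam_of_mem hKc.isBounded (hTK hz) hC
        refine add_le_add le_rfl ?_
        calc v z * fderivWithin ℝ v K z (z - C)
            ≤ |v z| * ‖fderivWithin ℝ v K z (z - C)‖ := by
              rw [Real.norm_eq_abs, ← abs_mul]; exact le_abs_self _
          _ ≤ |v z| * (‖fderivWithin ℝ v K z‖ * diam K) := by
              gcongr
              exact (ContinuousLinearMap.le_opNorm _ _).trans (by gcongr)
          _ = diam K * (|v z| * ‖fderivWithin ℝ v K z‖) := by ring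
    have h2 := integral_mul_le_sqrt_mul_sqrt hKc hTK hvc.abs hG.norm hTm
      (fun _ => abs_nonneg _) (fun _ => norm_nonneg _)
    simp only [sq_abs] at h2
    rw [← hgrad] at h2
    change _ ≤ L2T v T * _ at h2
    rw [integral_add (f := fun z => v z ^ 2)
      (g := fun z => diam K * (|v z| * ‖fderivWithin ℝ v K z‖)) (hint _ (hvc.pow 2))
      (hint _ (continuousOn_const.mul (hvc.abs.mul hG.norm))), integral_const_mul] at h1
    have h3 : ∫ z in T, v z ^ 2 = L2T v T ^ 2 :=
      (Real.sq_sqrt (integral_nonneg fun _ => sq_nonneg _)).symm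
    have ha : 0 ≤ L2T v T := Real.sqrt_nonneg _
    have hb : 0 ≤ gradL2 v T := Real.sqrt_nonneg _
    have hh : 0 ≤ diam K := diam_nonneg
    have h4 := mul_le_mul_of_nonneg_left h2 hh
    have h5 : 0 ≤ diam K * (L2T v T * gradL2 v T) := by positivity
    have h6 : 0 ≤ (diam K * gradL2 v T) ^ 2 := by positivity
    rw [h3] at h1
    nlinarith
  have hnn : 0 ≤ L2T v T + diam K * gradL2 v T :=
    add_nonneg (Real.sqrt_nonneg _) (mul_nonneg diam_nonneg (Real.sqrt_nonneg _))
  rw [L2edge, edge_integral A B hAB, ← Real.sqrt_sq hnn, ← Real.sqrt_mul (by positivity)]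
  apply Real.sqrt_le_sqrt
  calc dist A B * ∫ t in (0:ℝ)..1, v (A + t • (B - A)) ^ 2
      = dist A B / (volume T).toReal * ∫ z in T, (v z ^ 2 + v z * fderivWithin ℝ v K z (z - C)) := by
        rw [heq]; field_simp
    _ ≤ _ := by gcongr
end
end
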